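/- arXiv:2002.11112 — 3 statements merged into one kernel-verified Lean document; each statement's English description precedes it below -/
import Mathlib

section
/- Let K, L be star bodies in ℝⁿ and p ≥ 1. Define the L_p harmonic radial sum K ⊕_p L by ρ(K⊕_pL, u)^{-p} = ρ(K,u)^{-p} + ρ(L,u)^{-p} for all u ∈ S^{n-1}. Then V(K⊕_pL)^{-p/n} ≥ V(K)^{-p/n} + V(L)^{-p/n}, with equality if and only if K and L are dilates. -/
open MeasureTheory Metric Real

/-- The surface (spherical) measure on the unit sphere `S^{n-1} ⊆ ℝⁿ`. -/
noncomputable def sphereσ (n : ℕ) : Measure (sphere (0 : EuclideanSpace ℝ (Fin n)) 1) :=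
  μH[(n : ℝ) - 1]


lemma aux_conv {r a b l m : ℝ} (hr : 0 < r) (ha : 0 < a) (hb : 0 < b) (hl : 0 < l) (hm : 0 < m)
    (hlm : l + m = 1) (hab : a ≠ b) :
    (l * a + m * b) ^ (-r) < l * a ^ (-r) + m * b ^ (-r) := by
  have h1 := strictConcaveOn_log_Ioi.2 (Set.mem_Ioi.2 ha) (Set.mem_Ioi.2 hb) hab hl hm hlm
  have h2 := convexOn_exp.2 (Set.mem_univ (log a * -r)) (Set.mem_univ (log b * -r)) hl.le hm.le hlm
  simp only [smul_eq_mul] at h1 h2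
  rw [rpow_def_of_pos (by positivity), rpow_def_of_pos ha, rpow_def_of_pos hb]
  refine lt_of_lt_of_le (Real.exp_lt_exp.2 ?_) h2
  nlinarith

lemma aux_pt {s x y z A B C : ℝ} (hs : 0 < s) (hx : 0 < x) (hy : 0 < y) (hz : 0 < z)
    (hA : 0 < A) (hB : 0 < B) (hC : 0 < C) (h1 : z ^ (-s) = x ^ (-s) + y ^ (-s))
    (h2 : C ^ (-s) = A ^ (-s) + B ^ (-s)) :
    z ≤ C * (A ^ (-s) / C ^ (-s) * (x / A) + B ^ (-s) / C ^ (-s) * (y / B)) ∧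
    (z = C * (A ^ (-s) / C ^ (-s) * (x / A) + B ^ (-s) / C ^ (-s) * (y / B)) ↔
      x / A = y / B) := by
  have hAs := rpow_pos_of_pos hA (-s)
  have hBs := rpow_pos_of_pos hB (-s)
  have hCs := rpow_pos_of_pos hC (-s)
  have hl : 0 < A ^ (-s) / C ^ (-s) := by positivity
  have hm : 0 < B ^ (-s) / C ^ (-s) := by positivity
  have hlm : A ^ (-s) / C ^ (-s) + B ^ (-s) / C ^ (-s) = 1 := by
    rw [← add_div, ← h2, div_self hCs.ne']
  have inv : ∀ t : ℝ, 0 < t → (t ^ (-s)) ^ (-(1 / s)) = t := by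
    intro t ht
    rw [← rpow_mul ht.le]
    have : -s * -(1 / s) = 1 := by field_simp
    rw [this, rpow_one]
  have hxA : 0 < x / A := by positivity
  have hyB : 0 < y / B := by positivity
  have hzC : 0 < z / C := by positivity
  have hcomb : A ^ (-s) / C ^ (-s) * (x / A) ^ (-s) + B ^ (-s) / C ^ (-s) * (y / B) ^ (-s)
      = (z / C) ^ (-s) := by
    rw [div_rpow hx.le hA.le, div_rpow hy.le hB.le, div_rpow hz.le hC.le, h1]
    field_simp
  generalize A ^ (-s) / C ^ (-s) = l at *
  generalize B ^ (-s) / C ^ (-s) = m at *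
  by_cases h : x / A = y / B
  · have e1 : (x / A) ^ (-s) = (z / C) ^ (-s) := by
      rw [← hcomb, ← h, ← add_mul, hlm, one_mul]
    have e2 : x / A = z / C := by rw [← inv _ hxA, e1, inv _ hzC]
    have e3 : z = C * (l * (x / A) + m * (y / B)) := by
      rw [← h, ← add_mul, hlm, one_mul, e2]; field_simp
    exact ⟨e3.le, fun _ => h, fun _ => e3⟩
  · have hne : (x / A) ^ (-s) ≠ (y / B) ^ (-s) := by
      intro e; apply h; rw [← inv _ hxA, e, inv _ hyB]
    have := aux_conv (r := 1 / s) (by positivity) (rpow_pos_of_pos hxA (-s))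
      (rpow_pos_of_pos hyB (-s)) hl hm hlm hne
    rw [hcomb, inv _ hxA, inv _ hyB, inv _ hzC, div_lt_iff₀ hC] at this
    rw [mul_comm] at this
    exact ⟨this.le, fun e => absurd e this.ne, fun e => absurd e h⟩

lemma aux_finrank {n : ℕ} (hn : 0 < n) {v : EuclideanSpace ℝ (Fin n)} (hv : ‖v‖ = 1) :
    (Module.finrank ℝ (ℝ ∙ v)ᗮ : ℝ) = (n : ℝ) - 1 := by
  have hv0 : v ≠ 0 := by rintro rfl; simp at hv
  have h1 := Submodule.finrank_add_finrank_orthogonal (ℝ ∙ v)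
  rw [finrank_span_singleton hv0, finrank_euclideanSpace_fin] at h1
  have h2 : ((1 + Module.finrank ℝ (ℝ ∙ v)ᗮ : ℕ) : ℝ) = n := congrArg _ h1
  push_cast at h2
  linarith

lemma aux_finite (n : ℕ) (hn : 0 < n) : IsFiniteMeasure (sphereσ n) := by
  have hd : (0 : ℝ) ≤ (n : ℝ) - 1 := by
    have : (1 : ℝ) ≤ n := by exact_mod_cast hn
    linarith
  have : IsLocallyFiniteMeasure (sphereσ n) := by
    refine ⟨fun u => ?_⟩
    have hv : ‖((-u : sphere (0 : EuclideanSpace ℝ (Fin n)) 1) : EuclideanSpace ℝ (Fin n))‖ = 1 := by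
      simp
    set v := ((-u : sphere (0 : EuclideanSpace ℝ (Fin n)) 1) : EuclideanSpace ℝ (Fin n)) with hvdef
    have hu : u ∈ (stereographic hv).source := by
      rw [stereographic_source]
      simp only [Set.mem_compl_iff, Set.mem_singleton_iff]
      intro h
      have : (u : EuclideanSpace ℝ (Fin n)) = - u := by
        conv_lhs => rw [h]
        simp [hvdef]
      exact ne_neg_of_mem_unit_sphere ℝ u (Subtype.ext this)
    set w := stereographic hv u with hw
    have hc : ContDiff ℝ 1 (fun x : (ℝ ∙ v)ᗮ => stereoInvFunAux v (x : EuclideanSpace ℝ (Fin n))) :=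
      contDiff_stereoInvFunAux.comp (ℝ ∙ v)ᗮ.subtypeL.contDiff
    obtain ⟨K, t, ht, hK⟩ := (hc.contDiffAt (x := w)).exists_lipschitzOnWith
    have hK' : LipschitzOnWith K (stereographic hv).symm (t ∩ closedBall w 1) := by
      intro x hx y hy
      exact hK hx.1 hy.1
    refine ⟨(stereographic hv).source ∩ (stereographic hv) ⁻¹' (t ∩ closedBall w 1), ?_, ?_⟩
    · refine Filter.inter_mem ((stereographic hv).open_source.mem_nhds hu) ?_
      exact ((stereographic hv).continuousAt hu).preimage_mem_nhds
        (Filter.inter_mem ht (closedBall_mem_nhds _ one_pos))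
    · have hsub : (stereographic hv).source ∩ (stereographic hv) ⁻¹' (t ∩ closedBall w 1) ⊆
          (stereographic hv).symm '' (t ∩ closedBall w 1) := by
        rintro x ⟨hx1, hx2⟩
        exact ⟨_, hx2, (stereographic hv).left_inv hx1⟩
      refine (measure_mono hsub).trans_lt ?_
      refine (hK'.hausdorffMeasure_image_le hd).trans_lt ?_
      refine ENNReal.mul_lt_top (ENNReal.rpow_lt_top_of_nonneg hd ENNReal.coe_ne_top) ?_
      rw [← aux_finrank hn hv]
      exact (measure_mono Set.inter_subset_right).trans_lt
        (isCompact_closedBall w 1).measure_lt_top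
  exact CompactSpace.isFiniteMeasure

lemma aux_openPos (n : ℕ) (hn : 0 < n) : (sphereσ n).IsOpenPosMeasure := by
  have hd : (0 : ℝ) ≤ (n : ℝ) - 1 := by
    have : (1 : ℝ) ≤ n := by exact_mod_cast hn
    linarith
  refine ⟨fun U hU ⟨u, huU⟩ h0 => ?_⟩
  have hv : ‖((-u : sphere (0 : EuclideanSpace ℝ (Fin n)) 1) : EuclideanSpace ℝ (Fin n))‖ = 1 := by
    simp
  set v := ((-u : sphere (0 : EuclideanSpace ℝ (Fin n)) 1) : EuclideanSpace ℝ (Fin n)) with hvdef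
  have hu : u ∈ (stereographic hv).source := by
    rw [stereographic_source]
    simp only [Set.mem_compl_iff, Set.mem_singleton_iff]
    intro h
    have : (u : EuclideanSpace ℝ (Fin n)) = - u := by
      conv_lhs => rw [h]
      simp [hvdef]
    exact ne_neg_of_mem_unit_sphere ℝ u (Subtype.ext this)
  have hopen : IsOpen {x : EuclideanSpace ℝ (Fin n) | innerSL ℝ v x ≠ (1 : ℝ)} :=
    isOpen_ne_fun (innerSL ℝ v).continuous continuous_const
  have hmem : (u : EuclideanSpace ℝ (Fin n)) ∈
      {x : EuclideanSpace ℝ (Fin n) | innerSL ℝ v x ≠ (1 : ℝ)} := by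
    simp [hvdef]
    norm_num
  have hc : ContDiffAt ℝ 1 (stereoToFun v) (u : EuclideanSpace ℝ (Fin n)) :=
    contDiffOn_stereoToFun.contDiffAt (hopen.mem_nhds hmem)
  obtain ⟨K, t, ht, hK⟩ := hc.exists_lipschitzOnWith
  have ht' : (Subtype.val ⁻¹' t : Set (sphere (0 : EuclideanSpace ℝ (Fin n)) 1)) ∈ nhds u :=
    continuous_subtype_val.continuousAt.preimage_mem_nhds ht
  have hK' : LipschitzOnWith K (stereographic hv) (U ∩ Subtype.val ⁻¹' t) := by
    intro x hx y hy
    exact hK hx.2 hy.2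
  have him : (stereographic hv) '' (U ∩ Subtype.val ⁻¹' t) ∈ nhds (stereographic hv u) :=
    (stereographic hv).image_mem_nhds hu (Filter.inter_mem (hU.mem_nhds huU) ht')
  have h1 : (μH[(n : ℝ) - 1] : Measure (ℝ ∙ v)ᗮ)
      ((stereographic hv) '' (U ∩ Subtype.val ⁻¹' t)) ≤ 0 := by
    refine (hK'.hausdorffMeasure_image_le hd).trans ?_
    have : (μH[(n : ℝ) - 1] : Measure (sphere (0 : EuclideanSpace ℝ (Fin n)) 1))
        (U ∩ Subtype.val ⁻¹' t) = 0 := measure_mono_null Set.inter_subset_left h0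
    rw [this, mul_zero]
  rw [← aux_finrank hn hv] at h1
  exact absurd h1 (not_le.2 (Measure.measure_pos_of_mem_nhds _ him))

/-- The `L_p`-dual Brunn–Minkowski inequality for the `L_p` harmonic radial sum:
`V(K ⊕ₚ L)^{-p/n} ≥ V(K)^{-p/n} + V(L)^{-p/n}`, with equality iff `K, L` are dilates. -/
theorem Lp_dual_brunn_minkowski
    (n : ℕ) (hn : 0 < n) (p : ℝ) (hp : 1 ≤ p)
    (ρK ρL ρS : sphere (0 : EuclideanSpace ℝ (Fin n)) 1 → ℝ)
    (hKc : Continuous ρK) (hLc : Continuous ρL) (hSc : Continuous ρS)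
    (hKpos : ∀ u, 0 < ρK u) (hLpos : ∀ u, 0 < ρL u) (hSpos : ∀ u, 0 < ρS u)
    (hsum : ∀ u, (ρS u) ^ (-p) = (ρK u) ^ (-p) + (ρL u) ^ (-p))
    (VK VL VS : ℝ)
    (hVK : VK = (1 / n) * ∫ u, (ρK u) ^ (n : ℕ) ∂(sphereσ n))
    (hVL : VL = (1 / n) * ∫ u, (ρL u) ^ (n : ℕ) ∂(sphereσ n))
    (hVS : VS = (1 / n) * ∫ u, (ρS u) ^ (n : ℕ) ∂(sphereσ n)) :
    VS ^ (-p / n) ≥ VK ^ (-p / n) + VL ^ (-p / n) ∧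
      (VS ^ (-p / n) = VK ^ (-p / n) + VL ^ (-p / n) ↔
        ∃ c : ℝ, 0 < c ∧ ∀ u, ρK u = c * ρL u) := by
  have hfin := aux_finite n hn
  have hop := aux_openPos n hn
  have hn' : (0 : ℝ) < n := by exact_mod_cast hn
  have hne : Nonempty (sphere (0 : EuclideanSpace ℝ (Fin n)) 1) := by
    have : Nonempty (Fin n) := ⟨⟨0, hn⟩⟩
    exact (NormedSpace.sphere_nonempty.2 zero_le_one).to_subtype
  have hIntegrable : ∀ f : sphere (0 : EuclideanSpace ℝ (Fin n)) 1 → ℝ, Continuous f →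
      Integrable f (sphereσ n) := fun f hf =>
    hf.integrable_of_hasCompactSupport (HasCompactSupport.of_compactSpace f)
  have hzero : ∀ f : sphere (0 : EuclideanSpace ℝ (Fin n)) 1 → ℝ, Continuous f → (∀ u, 0 ≤ f u) →
      (∫ u, f u ∂(sphereσ n) = 0 ↔ ∀ u, f u = 0) := by
    intro f hf h0
    rw [integral_eq_zero_iff_of_nonneg h0 (hIntegrable f hf),
      Continuous.ae_eq_iff_eq _ hf continuous_zero, funext_iff]
    rfl
  have hpos : ∀ f : sphere (0 : EuclideanSpace ℝ (Fin n)) 1 → ℝ, Continuous f → (∀ u, 0 < f u) →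
      0 < (1 / n : ℝ) * ∫ u, (f u) ^ n ∂(sphereσ n) := by
    intro f hf h0
    refine mul_pos (by positivity) (lt_of_le_of_ne
      (integral_nonneg fun u => (pow_pos (h0 u) n).le) fun h => ?_)
    obtain ⟨u⟩ := hne
    exact (pow_pos (h0 u) n).ne' ((hzero _ (hf.pow n) fun u => (pow_pos (h0 u) n).le).1 h.symm u)
  have hK0 : 0 < VK := hVK ▸ hpos ρK hKc hKpos
  have hL0 : 0 < VL := hVL ▸ hpos ρL hLc hLpos
  have hS0 : 0 < VS := hVS ▸ hpos ρS hSc hSpos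
  obtain ⟨s, hs⟩ : ∃ s : ℝ, s = p / n := ⟨_, rfl⟩
  have hs0 : 0 < s := by rw [hs]; positivity
  have hsn : -p / n = -s := by rw [hs, neg_div]
  rw [hsn]
  have hpow : ∀ x : ℝ, 0 < x → (x ^ n) ^ (-s) = x ^ (-p) := by
    intro x hx
    rw [← rpow_natCast, ← rpow_mul hx.le, hs]
    congr 1
    field_simp
  obtain ⟨C, hC0, hC⟩ : ∃ C : ℝ, 0 < C ∧ C ^ (-s) = VK ^ (-s) + VL ^ (-s) := by
    have h0 : 0 < VK ^ (-s) + VL ^ (-s) := by positivity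
    refine ⟨(VK ^ (-s) + VL ^ (-s)) ^ (-(1 / s)), by positivity, ?_⟩
    rw [← rpow_mul h0.le]
    have : -(1 / s) * -s = 1 := by field_simp
    rw [this, rpow_one]
  have hpt := fun u => aux_pt hs0 (pow_pos (hKpos u) n) (pow_pos (hLpos u) n)
    (pow_pos (hSpos u) n) hK0 hL0 hC0
    (by rw [hpow _ (hKpos u), hpow _ (hLpos u), hpow _ (hSpos u), hsum u]) hC
  have hlm : VK ^ (-s) / C ^ (-s) + VL ^ (-s) / C ^ (-s) = 1 := by
    rw [← add_div, ← hC, div_self (by positivity)]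
  rw [← hC]
  generalize VK ^ (-s) / C ^ (-s) = l at *
  generalize VL ^ (-s) / C ^ (-s) = m at *
  let T : sphere (0 : EuclideanSpace ℝ (Fin n)) 1 → ℝ := fun u =>
    C * (l * (ρK u ^ n / VK) + m * (ρL u ^ n / VL)) - ρS u ^ n
  have hTc : Continuous T := by fun_prop
  have hT0 : ∀ u, 0 ≤ T u := fun u => sub_nonneg.2 (hpt u).1
  have hTint : (1 / n : ℝ) * ∫ u, T u ∂(sphereσ n) = C - VS := by
    have iK : Integrable (fun u => ρK u ^ n) (sphereσ n) := hIntegrable _ (hKc.pow n)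
    have iL : Integrable (fun u => ρL u ^ n) (sphereσ n) := hIntegrable _ (hLc.pow n)
    have iS : Integrable (fun u => ρS u ^ n) (sphereσ n) := hIntegrable _ (hSc.pow n)
    have e : ∫ u, T u ∂(sphereσ n) = C * (l * ((∫ u, ρK u ^ n ∂(sphereσ n)) / VK)
        + m * ((∫ u, ρL u ^ n ∂(sphereσ n)) / VL)) - ∫ u, ρS u ^ n ∂(sphereσ n) := by
      simp only [T]
      have i1 : Integrable (fun u => l * (ρK u ^ n / VK)) (sphereσ n) :=
        (iK.div_const VK).const_mul l
      have i2 : Integrable (fun u => m * (ρL u ^ n / VL)) (sphereσ n) :=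
        (iL.div_const VL).const_mul m
      have i3 : Integrable (fun u => C * (l * (ρK u ^ n / VK) + m * (ρL u ^ n / VL)))
        (sphereσ n) := (i1.add i2).const_mul C
      rw [integral_sub i3 iS, integral_const_mul, integral_add i1 i2,
        integral_const_mul, integral_const_mul, integral_div, integral_div]
    have eK : ∫ u, ρK u ^ n ∂(sphereσ n) = n * VK := by rw [hVK]; field_simp
    have eL : ∫ u, ρL u ^ n ∂(sphereσ n) = n * VL := by rw [hVL]; field_simp
    have eS : ∫ u, ρS u ^ n ∂(sphereσ n) = n * VS := by rw [hVS]; field_simp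
    rw [e, eK, eL, eS]
    field_simp
    rw [hlm, mul_one]
  have hVC : VS ≤ C := by
    have : 0 ≤ (1 / n : ℝ) * ∫ u, T u ∂(sphereσ n) :=
      mul_nonneg (by positivity) (integral_nonneg hT0)
    linarith
  refine ⟨rpow_le_rpow_of_nonpos hS0 hVC (by linarith), ?_⟩
  have hE : VS ^ (-s) = C ^ (-s) ↔ ∀ u, ρK u ^ n / VK = ρL u ^ n / VL := by
    rw [rpow_left_inj hS0.le hC0.le (by linarith)]
    have : VS = C ↔ ∫ u, T u ∂(sphereσ n) = 0 := by
      constructor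
      · intro h
        rw [h, sub_self] at hTint
        exact (mul_eq_zero.1 hTint).resolve_left (by positivity)
      · intro h
        rw [h, mul_zero] at hTint
        linarith
    rw [this, hzero T hTc hT0]
    refine forall_congr' fun u => ?_
    rw [← (hpt u).2]
    exact sub_eq_zero.trans eq_comm
  rw [hE]
  constructor
  · intro h
    have hq : 0 < VK / VL := by positivity
    refine ⟨(VK / VL) ^ (1 / n : ℝ), by positivity, fun u => ?_⟩
    have hc : ((VK / VL) ^ (1 / n : ℝ)) ^ n = VK / VL := by
      rw [one_div, rpow_inv_natCast_pow hq.le hn.ne']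
    refine (pow_left_inj₀ (hKpos u).le (mul_pos (by positivity) (hLpos u)).le hn.ne').1 ?_
    rw [mul_pow, hc]
    have := h u
    field_simp at this ⊢
    linarith
  · rintro ⟨c, hc, h⟩ u
    have e : VK = c ^ n * VL := by
      rw [hVK, hVL]
      simp only [h, mul_pow]
      rw [integral_const_mul]
      ring
    rw [h u, e, mul_pow]
    have : 0 < c ^ n := pow_pos hc n
    field_simp
end

section
/- Let φ : (0,∞) → (0,∞) be convex and strictly decreasing, L₁, K₁,...,Kₙ star bodies in ℝⁿ, and 1 ≤ r ≤ n. Then the dual Orlicz–Aleksandrov–Fenchel inequality holds: Ṽ_φ(L₁,K₁,K₂,...,Kₙ) ≥ Ṽ(L₁,K₂,...,Kₙ) · φ( ∏_{i=1}^r Ṽ(Kᵢ,...,Kᵢ,K_{r+1},...,Kₙ)^{1/r} / Ṽ(L₁,K₂,...,Kₙ) ). If φ is strictly convex, equality holds if and only if L₁, K₁, ..., K_r are all dilations of each other. -/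
open MeasureTheory Metric Real Set Finset

lemma sphere_aux_finrank {n : ℕ} (hn : 1 ≤ n) (v : EuclideanSpace ℝ (Fin n)) (hv : ‖v‖ = 1) :
    ((Module.finrank ℝ (Submodule.span ℝ {v})ᗮ : ℕ) : ℝ) = (n : ℝ) - 1 := by
  have hv0 : v ≠ 0 := by
    intro h
    simp [h] at hv
  obtain ⟨m, rfl⟩ : ∃ m, n = m + 1 := ⟨n - 1, by omega⟩
  have : Fact (Module.finrank ℝ (EuclideanSpace ℝ (Fin (m + 1))) = m + 1) := ⟨by simp⟩
  rw [Submodule.finrank_orthogonal_span_singleton hv0 (n := m)]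
  push_cast
  ring

lemma sphere_open_pos {n : ℕ} (hn : 1 ≤ n) : (sphereσ n).IsOpenPosMeasure := by
  constructor
  rintro U hU ⟨u, hu⟩ h0
  have hn0 : (0 : ℝ) ≤ (n : ℝ) - 1 := by
    have : (1 : ℝ) ≤ n := by exact_mod_cast hn
    linarith
  have hv : ‖(((-u : sphere (0 : EuclideanSpace ℝ (Fin n)) 1)) : EuclideanSpace ℝ (Fin n))‖ = 1 :=
    norm_eq_of_mem_sphere (-u)
  set v : EuclideanSpace ℝ (Fin n) :=
    ((-u : sphere (0 : EuclideanSpace ℝ (Fin n)) 1) : EuclideanSpace ℝ (Fin n)) with hvdef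
  have huv : innerSL ℝ v (u : EuclideanSpace ℝ (Fin n)) ≠ (1 : ℝ) := by
    simp [hvdef]
    norm_num
  have hopen : IsOpen {x : EuclideanSpace ℝ (Fin n) | innerSL ℝ v x ≠ (1 : ℝ)} :=
    isOpen_ne_fun (innerSL ℝ v).continuous continuous_const
  have hcd : ContDiffAt ℝ 1 (stereoToFun v) (u : EuclideanSpace ℝ (Fin n)) :=
    (contDiffOn_stereoToFun (n := 1)).contDiffAt (hopen.mem_nhds huv)
  obtain ⟨K, s, hs, hl⟩ := hcd.exists_lipschitzOnWith
  have hsrc : u ∈ (stereographic hv).source := by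
    simp only [stereographic_source, Set.mem_compl_iff, Set.mem_singleton_iff]
    intro h
    apply huv
    have h2 : (u : EuclideanSpace ℝ (Fin n)) = v := congrArg Subtype.val h
    rw [h2]
    simp [hv]
  set W : Set (sphere (0 : EuclideanSpace ℝ (Fin n)) 1) := U ∩ Subtype.val ⁻¹' s with hW
  have hWn : W ∈ nhds u :=
    Filter.inter_mem (hU.mem_nhds hu) (continuous_subtype_val.continuousAt.preimage_mem_nhds hs)
  have him := (stereographic hv).image_mem_nhds hsrc hWn
  have hlW : LipschitzOnWith K (stereographic hv) W := by
    intro x hx y hy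
    exact hl hx.2 hy.2
  have hle := hlW.hausdorffMeasure_image_le hn0
  have hW0 : μH[(n : ℝ) - 1] W = 0 := measure_mono_null Set.inter_subset_left h0
  rw [hW0, mul_zero, ← sphere_aux_finrank hn v hv] at hle
  have hpos := Measure.measure_pos_of_mem_nhds
    (μH[(Module.finrank ℝ (Submodule.span ℝ {v})ᗮ : ℕ)]) him
  exact absurd hle (not_le.mpr hpos)

lemma sphere_finite {n : ℕ} (hn : 1 ≤ n) : IsFiniteMeasure (sphereσ n) := by
  have hn0 : (0 : ℝ) ≤ (n : ℝ) - 1 := by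
    have : (1 : ℝ) ≤ n := by exact_mod_cast hn
    linarith
  have key : ∀ u : sphere (0 : EuclideanSpace ℝ (Fin n)) 1, (sphereσ n).FiniteAtFilter (nhds u) := by
    intro u
    have hv : ‖(((-u : sphere (0 : EuclideanSpace ℝ (Fin n)) 1)) : EuclideanSpace ℝ (Fin n))‖ = 1 :=
      norm_eq_of_mem_sphere (-u)
    have h0 := stereographic_neg_apply u
    set v : EuclideanSpace ℝ (Fin n) :=
      ((-u : sphere (0 : EuclideanSpace ℝ (Fin n)) 1) : EuclideanSpace ℝ (Fin n)) with hvdef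
    have huv : innerSL ℝ v (u : EuclideanSpace ℝ (Fin n)) ≠ (1 : ℝ) := by
      simp [hvdef]
      norm_num
    have hsrc : u ∈ (stereographic hv).source := by
      simp only [stereographic_source, Set.mem_compl_iff, Set.mem_singleton_iff]
      intro h
      apply huv
      have h2 : (u : EuclideanSpace ℝ (Fin n)) = v := congrArg Subtype.val h
      rw [h2]
      simp [hv]
    have hcd : ContDiffAt ℝ 1 (stereoInvFunAux v) (0 : EuclideanSpace ℝ (Fin n)) :=
      contDiff_stereoInvFunAux.contDiffAt
    obtain ⟨K, s, hs, hl⟩ := hcd.exists_lipschitzOnWith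
    have hs' : (Subtype.val ⁻¹' s : Set (Submodule.span ℝ {v})ᗮ) ∈ nhds 0 :=
      continuous_subtype_val.continuousAt.preimage_mem_nhds hs
    set W : Set (Submodule.span ℝ {v})ᗮ := Subtype.val ⁻¹' s ∩ closedBall 0 1 with hW
    have hWn : W ∈ nhds 0 := Filter.inter_mem hs' (closedBall_mem_nhds _ one_pos)
    have hlW : LipschitzOnWith K (stereographic hv).symm W := by
      intro x hx y hy
      exact hl hx.1 hy.1
    have htgt : (0 : (Submodule.span ℝ {v})ᗮ) ∈ (stereographic hv).symm.source := by
      simp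
    have him := (stereographic hv).symm.image_mem_nhds htgt hWn
    have hsymm : (stereographic hv).symm 0 = u := by
      rw [← h0]
      exact (stereographic hv).left_inv hsrc
    rw [hsymm] at him
    refine ⟨_, him, ?_⟩
    refine lt_of_le_of_lt (hlW.hausdorffMeasure_image_le hn0) ?_
    refine ENNReal.mul_lt_top (ENNReal.rpow_lt_top_of_nonneg hn0 ENNReal.coe_ne_top) ?_
    rw [← sphere_aux_finrank hn v hv]
    refine lt_of_le_of_lt (measure_mono Set.inter_subset_right) ?_
    exact (isCompact_closedBall _ _).measure_lt_top
  constructor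
  exact isCompact_univ.measure_lt_top_of_nhdsWithin (fun x _ => by
    rw [nhdsWithin_univ]; exact key x)

lemma convex_support_line {φ : ℝ → ℝ} (hφ : ConvexOn ℝ (Ioi 0) φ) {t₀ : ℝ} (ht₀ : 0 < t₀) :
    ∃ m : ℝ, ∀ t, 0 < t → φ t₀ + m * (t - t₀) ≤ φ t := by
  have hinte : t₀ ∈ interior (Ioi (0 : ℝ)) := by
    rw [interior_Ioi]; exact ht₀
  refine ⟨derivWithin φ (Ioi t₀) t₀, fun t ht => ?_⟩
  rcases lt_trichotomy t t₀ with h | h | h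
  · have h1 : slope φ t t₀ ≤ derivWithin φ (Iio t₀) t₀ :=
      hφ.slope_le_leftDeriv_of_mem_interior ht hinte h
    have h2 := hφ.leftDeriv_le_rightDeriv_of_mem_interior hinte
    have h3 := h1.trans h2
    rw [slope_def_field, div_le_iff₀ (by linarith)] at h3
    linarith
  · subst h; simp
  · have h1 := hφ.rightDeriv_le_slope_of_mem_interior hinte (Set.mem_Ioi.2 ht) h
    rw [slope_def_field, le_div_iff₀ (by linarith)] at h1
    linarith

lemma strict_support {φ : ℝ → ℝ} (hφ : StrictConvexOn ℝ (Ioi 0) φ) {t₀ m : ℝ} (ht₀ : 0 < t₀)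
    (hm : ∀ t, 0 < t → φ t₀ + m * (t - t₀) ≤ φ t) {t : ℝ} (ht : 0 < t)
    (h : φ t = φ t₀ + m * (t - t₀)) : t = t₀ := by
  by_contra hne
  have h1 := hφ.2 (Set.mem_Ioi.2 ht) (Set.mem_Ioi.2 ht₀) hne
    (by norm_num : (0 : ℝ) < 1 / 2) (by norm_num : (0 : ℝ) < 1 / 2) (by norm_num)
  have h2 := hm ((1 / 2 : ℝ) • t + (1 / 2 : ℝ) • t₀) (by simp only [smul_eq_mul]; positivity)
  simp only [smul_eq_mul] at h1 h2
  nlinarith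

lemma cont_integrable {X : Type*} [TopologicalSpace X] [CompactSpace X] [MeasurableSpace X]
    [BorelSpace X] {μ : Measure X} [IsFiniteMeasure μ] {f : X → ℝ} (hf : Continuous f) : Integrable f μ :=
  hf.integrable_of_hasCompactSupport (HasCompactSupport.of_compactSpace f)

section generic

variable {X : Type*} [TopologicalSpace X] [CompactSpace X] [MeasurableSpace X] [BorelSpace X]
  {μ : Measure X} [IsFiniteMeasure μ] [μ.IsOpenPosMeasure]

lemma cont_integral_pos [Nonempty X] {f : X → ℝ} (hf : Continuous f) (hp : ∀ u, 0 < f u) :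
    0 < ∫ u, f u ∂μ := by
  obtain ⟨x⟩ := ‹Nonempty X›
  exact hf.integral_pos_of_hasCompactSupport_nonneg_nonzero
    (HasCompactSupport.of_compactSpace f) (fun u => (hp u).le) (hp x).ne'

lemma cont_eq_zero {f : X → ℝ} (hf : Continuous f) (hp : ∀ u, 0 ≤ f u)
    (h0 : ∫ u, f u ∂μ = 0) : ∀ u, f u = 0 := by
  intro x
  by_contra hx
  exact (hf.integral_pos_of_hasCompactSupport_nonneg_nonzero (μ := μ)
    (HasCompactSupport.of_compactSpace f) hp hx).ne' h0

lemma jensen_generic [Nonempty X] {φ : ℝ → ℝ} (hφ : ConvexOn ℝ (Ioi 0) φ) {f w : X → ℝ}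
    (hf : Continuous f) (hfp : ∀ u, 0 < f u) (hw : Continuous w) (hwp : ∀ u, 0 < w u) :
    (∫ u, w u ∂μ) * φ ((∫ u, f u * w u ∂μ) / ∫ u, w u ∂μ) ≤ ∫ u, φ (f u) * w u ∂μ ∧
    (StrictConvexOn ℝ (Ioi 0) φ →
      ∫ u, φ (f u) * w u ∂μ = (∫ u, w u ∂μ) * φ ((∫ u, f u * w u ∂μ) / ∫ u, w u ∂μ) →
      ∀ u, f u = (∫ u, f u * w u ∂μ) / ∫ u, w u ∂μ) := by
  have hW : 0 < ∫ u, w u ∂μ := cont_integral_pos hw hwp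
  have hF : 0 < ∫ u, f u * w u ∂μ :=
    cont_integral_pos (hf.mul hw) (fun u => mul_pos (hfp u) (hwp u))
  set W := ∫ u, w u ∂μ with hWdef
  set F := ∫ u, f u * w u ∂μ with hFdef
  have ht₀ : 0 < F / W := div_pos hF hW
  set t₀ := F / W with ht₀def
  obtain ⟨m, hm⟩ := convex_support_line hφ ht₀
  have hφc : Continuous (fun u => φ (f u)) :=
    (hφ.continuousOn isOpen_Ioi).comp_continuous hf hfp
  have hcont : Continuous (fun u => (φ (f u) - (φ t₀ + m * (f u - t₀))) * w u) := by
    exact (hφc.sub (by fun_prop)).mul hw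
  have hnn : ∀ u, 0 ≤ (φ (f u) - (φ t₀ + m * (f u - t₀))) * w u := fun u =>
    mul_nonneg (sub_nonneg.2 (hm _ (hfp u))) (hwp u).le
  have hinte : ∫ u, (φ (f u) - (φ t₀ + m * (f u - t₀))) * w u ∂μ
      = (∫ u, φ (f u) * w u ∂μ) - W * φ t₀ := by
    have e : ∀ u, (φ (f u) - (φ t₀ + m * (f u - t₀))) * w u
        = φ (f u) * w u - ((φ t₀ - m * t₀) * w u + m * (f u * w u)) := fun u => by ring
    simp_rw [e]
    rw [integral_sub (cont_integrable (hφc.fun_mul hw)) (cont_integrable (by fun_prop)),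
      integral_add (cont_integrable (by fun_prop)) (cont_integrable (by fun_prop)),
      integral_const_mul, integral_const_mul, ← hWdef, ← hFdef]
    have : F = t₀ * W := by rw [ht₀def]; field_simp
    rw [this]; ring
  constructor
  · have := integral_nonneg (μ := μ) (f := fun u => (φ (f u) - (φ t₀ + m * (f u - t₀))) * w u) hnn
    rw [hinte] at this
    linarith
  · intro hs he u
    have h0 := cont_eq_zero hcont hnn (by rw [hinte, he, sub_self]) u
    have h1 := (mul_eq_zero.1 h0).resolve_right (hwp u).ne'
    exact strict_support hs ht₀ hm (hfp u) (by linarith)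

lemma af_generic [Nonempty X] {r : ℕ} (hr : 1 ≤ r) {g : ℕ → X → ℝ} {Q : X → ℝ}
    (hg : ∀ i ∈ Finset.Icc 1 r, Continuous (g i)) (hgp : ∀ i ∈ Finset.Icc 1 r, ∀ u, 0 < g i u)
    (hQ : Continuous Q) (hQp : ∀ u, 0 < Q u) {c : ℝ} (hc : 0 < c) {A : ℕ → ℝ}
    (hA : ∀ i, A i = c * ∫ u, g i u ^ r * Q u ∂μ) :
    c * ∫ u, (∏ i ∈ Finset.Icc 1 r, g i u) * Q u ∂μ ≤ ∏ i ∈ Finset.Icc 1 r, A i ^ ((r : ℝ)⁻¹) ∧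
    (c * ∫ u, (∏ i ∈ Finset.Icc 1 r, g i u) * Q u ∂μ = ∏ i ∈ Finset.Icc 1 r, A i ^ ((r : ℝ)⁻¹) →
      ∀ i ∈ Finset.Icc 1 r, ∀ j ∈ Finset.Icc 1 r, ∀ u,
        g i u / A i ^ ((r : ℝ)⁻¹) = g j u / A j ^ ((r : ℝ)⁻¹)) := by
  have hr0 : r ≠ 0 := by omega
  have hrR : (0 : ℝ) < r := by exact_mod_cast hr
  have hApos : ∀ i ∈ Finset.Icc 1 r, 0 < A i := fun i hi => by
    rw [hA]
    exact mul_pos hc (cont_integral_pos (((hg i hi).pow r).mul hQ)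
      (fun u => mul_pos (pow_pos (hgp i hi u) r) (hQp u)))
  set a : ℕ → ℝ := fun i => A i ^ ((r : ℝ)⁻¹) with ha
  have hapos : ∀ i ∈ Finset.Icc 1 r, 0 < a i := fun i hi => Real.rpow_pos_of_pos (hApos i hi) _
  have hapow : ∀ i ∈ Finset.Icc 1 r, a i ^ r = A i := fun i hi =>
    Real.rpow_inv_natCast_pow (hApos i hi).le hr0
  have hP : 0 < ∏ i ∈ Finset.Icc 1 r, a i := Finset.prod_pos hapos
  have hw1 : ∑ i ∈ Finset.Icc 1 r, (r : ℝ)⁻¹ = 1 := by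
    simp [hr0]
  have hz0 : ∀ u, ∀ i ∈ Finset.Icc 1 r, 0 ≤ (g i u / a i) ^ r := fun u i hi =>
    (pow_pos (div_pos (hgp i hi u) (hapos i hi)) r).le
  have hgm : ∀ u, ∏ i ∈ Finset.Icc 1 r, ((g i u / a i) ^ r) ^ ((r : ℝ)⁻¹)
      = (∏ i ∈ Finset.Icc 1 r, g i u) / ∏ i ∈ Finset.Icc 1 r, a i := fun u => by
    rw [← Finset.prod_div_distrib]
    refine Finset.prod_congr rfl fun i hi => ?_
    exact Real.pow_rpow_inv_natCast (div_pos (hgp i hi u) (hapos i hi)).le hr0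
  set D : X → ℝ := fun u => ((∑ i ∈ Finset.Icc 1 r, (r : ℝ)⁻¹ * (g i u / a i) ^ r)
    - (∏ i ∈ Finset.Icc 1 r, g i u) / ∏ i ∈ Finset.Icc 1 r, a i) * Q u with hD
  have hprodc : Continuous (fun u => ∏ i ∈ Finset.Icc 1 r, g i u) :=
    continuous_finsetProd _ hg
  have hDc : Continuous D := by
    refine Continuous.mul (Continuous.sub ?_ (hprodc.div_const _)) hQ
    exact continuous_finsetSum _ fun i hi => (((hg i hi).div_const _).pow r).const_mul _
  have hDn : ∀ u, 0 ≤ D u := fun u => by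
    refine mul_nonneg (sub_nonneg.2 ?_) (hQp u).le
    rw [← hgm]
    exact Real.geom_mean_le_arith_mean_weighted _ _ _ (fun i _ => by positivity) hw1 (hz0 u)
  have hDi : c * ∫ u, D u ∂μ = 1 - (c * ∫ u, (∏ i ∈ Finset.Icc 1 r, g i u) * Q u ∂μ)
      / ∏ i ∈ Finset.Icc 1 r, a i := by
    have e : ∀ u, D u = (∑ i ∈ Finset.Icc 1 r, ((r : ℝ)⁻¹ / A i) * (g i u ^ r * Q u))
        - (∏ i ∈ Finset.Icc 1 r, a i)⁻¹ * ((∏ i ∈ Finset.Icc 1 r, g i u) * Q u) := fun u => by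
      simp only [hD]
      rw [sub_mul, Finset.sum_mul]
      congr 1
      · refine Finset.sum_congr rfl fun i hi => ?_
        rw [div_pow, hapow i hi]; ring
      · ring
    simp_rw [e]
    have hic : ∀ i ∈ Finset.Icc 1 r, Integrable (fun u => ((r : ℝ)⁻¹ / A i) * (g i u ^ r * Q u)) μ :=
      fun i hi => cont_integrable ((((hg i hi).pow r).mul hQ).const_mul _)
    rw [integral_sub (integrable_finsetSum _ hic)
      (cont_integrable ((hprodc.fun_mul hQ).const_mul _)), integral_finsetSum _ hic]
    simp_rw [integral_const_mul]
    rw [mul_sub, Finset.mul_sum]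
    congr 1
    · rw [← hw1]
      refine Finset.sum_congr rfl fun i hi => ?_
      have h1 := hApos i hi
      have h2 := hA i
      calc c * ((r : ℝ)⁻¹ / A i * ∫ u, g i u ^ r * Q u ∂μ)
          = (r : ℝ)⁻¹ / A i * (c * ∫ u, g i u ^ r * Q u ∂μ) := by ring
        _ = (r : ℝ)⁻¹ := by rw [← h2]; field_simp
    · ring
  constructor
  · have h1 : 0 ≤ c * ∫ u, D u ∂μ := mul_nonneg hc.le (integral_nonneg hDn)
    rw [hDi, sub_nonneg, div_le_one hP] at h1
    exact h1
  · intro he i hi j hj u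
    have h1 : c * ∫ u, D u ∂μ = 0 := by
      rw [hDi, he, div_self hP.ne', sub_self]
    have h2 := cont_eq_zero hDc hDn ((mul_eq_zero.1 h1).resolve_left hc.ne') u
    have h3 := (mul_eq_zero.1 h2).resolve_right (hQp u).ne'
    have h4 := (Real.geom_mean_eq_arith_mean_weighted_iff_of_pos (Finset.Icc 1 r)
      (fun _ => (r : ℝ)⁻¹) (fun i => (g i u / a i) ^ r) (fun i _ => by positivity) hw1 (hz0 u)).1
      (by rw [hgm]; linarith) i hi j hj
    exact (pow_left_inj₀ (div_pos (hgp i hi u) (hapos i hi)).le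
      (div_pos (hgp j hj u) (hapos j hj)).le hr0).1 h4

end generic

/-- The dual Orlicz–Aleksandrov–Fenchel inequality:
`Ṽ_φ(L₁,K₁,K₂,...,Kₙ) ≥ Ṽ(L₁,K₂,...,Kₙ)·φ(∏_{i=1}^r Ṽ(Kᵢ[r],K_{r+1},...,Kₙ)^{1/r}/Ṽ(L₁,K₂,...,Kₙ))`;
if `φ` is strictly convex, equality holds iff `L₁,K₁,...,K_r` are all dilations of
each other. The star bodies `K₁,...,Kₙ` have radial functions `ρ 1, ..., ρ n`. -/
theorem dual_orlicz_aleksandrov_fenchel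
    (n r : ℕ) (hr1 : 1 ≤ r) (hrn : r ≤ n)
    (φ : ℝ → ℝ)
    (hφconv : ConvexOn ℝ (Ioi 0) φ)
    (hφanti : StrictAntiOn φ (Ioi 0))
    (hφpos : ∀ t ∈ Ioi (0 : ℝ), 0 < φ t)
    (ρL : sphere (0 : EuclideanSpace ℝ (Fin n)) 1 → ℝ)
    (ρ : ℕ → (sphere (0 : EuclideanSpace ℝ (Fin n)) 1 → ℝ))
    (hLc : Continuous ρL) (hLpos : ∀ u, 0 < ρL u)
    (hc : ∀ i, 1 ≤ i → i ≤ n → Continuous (ρ i))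
    (hpos : ∀ i, 1 ≤ i → i ≤ n → ∀ u, 0 < ρ i u)
    (Vφ VL : ℝ) (VAF : ℕ → ℝ)
    (hVφ : Vφ = (1 / n) * ∫ u,
      φ (ρ 1 u / ρL u) * (ρL u * ∏ j ∈ Finset.Icc 2 n, ρ j u) ∂(sphereσ n))
    (hVL : VL = (1 / n) * ∫ u, ρL u * ∏ j ∈ Finset.Icc 2 n, ρ j u ∂(sphereσ n))
    (hVAF : ∀ i, VAF i =
      (1 / n) * ∫ u, (ρ i u) ^ r * ∏ j ∈ Finset.Icc (r + 1) n, ρ j u ∂(sphereσ n)) :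
    Vφ ≥ VL * φ ((∏ i ∈ Finset.Icc 1 r, (VAF i) ^ ((r : ℝ)⁻¹)) / VL) ∧
      (StrictConvexOn ℝ (Ioi 0) φ →
        (Vφ = VL * φ ((∏ i ∈ Finset.Icc 1 r, (VAF i) ^ ((r : ℝ)⁻¹)) / VL) ↔
          ∀ i, 1 ≤ i → i ≤ r → ∃ c : ℝ, 0 < c ∧ ∀ u, ρ i u = c * ρL u)) := by
  have hn1 : 1 ≤ n := hr1.trans hrn
  have hnR : (0 : ℝ) < n := by exact_mod_cast hn1
  have hr0 : r ≠ 0 := by omega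
  have := sphere_open_pos hn1
  have := sphere_finite hn1
  have hne : Nonempty (sphere (0 : EuclideanSpace ℝ (Fin n)) 1) := by
    refine ⟨⟨EuclideanSpace.single ⟨0, hn1⟩ 1, ?_⟩⟩
    simp
  have hc' : (0 : ℝ) < 1 / n := by positivity
  set P : sphere (0 : EuclideanSpace ℝ (Fin n)) 1 → ℝ :=
    fun u => ∏ j ∈ Finset.Icc 2 n, ρ j u with hPdef
  set Q : sphere (0 : EuclideanSpace ℝ (Fin n)) 1 → ℝ :=
    fun u => ∏ j ∈ Finset.Icc (r + 1) n, ρ j u with hQdef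
  replace hVφ : Vφ = (1 / n) * ∫ u, φ (ρ 1 u / ρL u) * (ρL u * P u) ∂(sphereσ n) := hVφ
  replace hVL : VL = (1 / n) * ∫ u, ρL u * P u ∂(sphereσ n) := hVL
  replace hVAF : ∀ i, VAF i = (1 / n) * ∫ u, (ρ i u) ^ r * Q u ∂(sphereσ n) := hVAF
  have hPc : Continuous P := continuous_finsetProd _ fun i hi => by
    rw [Finset.mem_Icc] at hi
    exact hc i (by omega) (by omega)
  have hQc : Continuous Q := continuous_finsetProd _ fun i hi => by
    rw [Finset.mem_Icc] at hi
    exact hc i (by omega) (by omega)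
  have hPp : ∀ u, 0 < P u := fun u => Finset.prod_pos fun i hi => by
    rw [Finset.mem_Icc] at hi
    exact hpos i (by omega) (by omega) u
  have hQp : ∀ u, 0 < Q u := fun u => Finset.prod_pos fun i hi => by
    rw [Finset.mem_Icc] at hi
    exact hpos i (by omega) (by omega) u
  have hgc : ∀ i ∈ Finset.Icc 1 r, Continuous (ρ i) := fun i hi => by
    rw [Finset.mem_Icc] at hi
    exact hc i (by omega) (by omega)
  have hgp : ∀ i ∈ Finset.Icc 1 r, ∀ u, 0 < ρ i u := fun i hi => by
    rw [Finset.mem_Icc] at hi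
    exact hpos i (by omega) (by omega)
  have h1mem : 1 ∈ Finset.Icc 1 r := Finset.mem_Icc.2 ⟨le_rfl, hr1⟩
  have hsplit : ∀ u, ρ 1 u * P u = (∏ i ∈ Finset.Icc 1 r, ρ i u) * Q u := fun u => by
    have e1 : Finset.Icc 2 n = Finset.Ioc 1 n := by ext x; simp <;> omega
    have e2 : Finset.Icc 1 r = Finset.Ioc 0 r := by ext x; simp <;> omega
    have e3 : Finset.Icc (r + 1) n = Finset.Ioc r n := by ext x; simp <;> omega
    have e4 : Finset.Icc 1 n = Finset.Ioc 0 n := by ext x; simp <;> omega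
    simp only [hPdef, hQdef]
    rw [e1, e2, e3, Finset.prod_Ioc_consecutive (fun i => ρ i u) (Nat.zero_le r) hrn, ← e4]
    exact Finset.mul_prod_Ioc_eq_prod_Icc (f := fun i => ρ i u) hn1
  have hfw : ∀ u, ρ 1 u / ρL u * (ρL u * P u) = (∏ i ∈ Finset.Icc 1 r, ρ i u) * Q u := fun u => by
    rw [← hsplit]
    have := (hLpos u).ne'
    field_simp
  have hJ := jensen_generic (μ := sphereσ n) hφconv (f := fun u => ρ 1 u / ρL u)
    (w := fun u => ρL u * P u)
    ((hgc 1 h1mem).div₀ hLc fun u => (hLpos u).ne') (fun u => div_pos (hgp 1 h1mem u) (hLpos u))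
    (hLc.mul hPc) (fun u => mul_pos (hLpos u) (hPp u))
  have hAF := af_generic (μ := sphereσ n) hr1 hgc hgp hQc hQp hc' hVAF
  have hW : 0 < ∫ u, ρL u * P u ∂(sphereσ n) :=
    cont_integral_pos (hLc.mul hPc) (fun u => mul_pos (hLpos u) (hPp u))
  have hTI : 0 < ∫ u, (∏ i ∈ Finset.Icc 1 r, ρ i u) * Q u ∂(sphereσ n) :=
    cont_integral_pos ((continuous_finsetProd _ hgc).mul hQc)
      (fun u => mul_pos (Finset.prod_pos fun i hi => hgp i hi u) (hQp u))
  simp only [hfw] at hJ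
  set I := ∫ u, (∏ i ∈ Finset.Icc 1 r, ρ i u) * Q u ∂(sphereσ n) with hI
  set W := ∫ u, ρL u * P u ∂(sphereσ n) with hWdef
  set Z := ∏ i ∈ Finset.Icc 1 r, (VAF i) ^ ((r : ℝ)⁻¹) with hZ
  have hVLpos : 0 < VL := by rw [hVL]; exact mul_pos hc' hW
  have hratio : I / W = (1 / n * I) / VL := by
    rw [hVL]; field_simp
  rw [hratio] at hJ
  set T := 1 / (n : ℝ) * I with hT
  have hTpos : 0 < T := mul_pos hc' hTI
  have hineq1 : VL * φ (T / VL) ≤ Vφ := by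
    have := mul_le_mul_of_nonneg_left hJ.1 hc'.le
    rw [hVφ]
    calc VL * φ (T / VL) = 1 / n * (W * φ (T / VL)) := by rw [hVL]; ring
      _ ≤ _ := this
  have hZpos : 0 < Z := lt_of_lt_of_le hTpos hAF.1
  have hle : T / VL ≤ Z / VL := div_le_div_of_nonneg_right hAF.1 hVLpos.le
  have hm1 : T / VL ∈ Ioi (0 : ℝ) := div_pos hTpos hVLpos
  have hm2 : Z / VL ∈ Ioi (0 : ℝ) := div_pos hZpos hVLpos
  have hineq2 : VL * φ (Z / VL) ≤ VL * φ (T / VL) :=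
    mul_le_mul_of_nonneg_left (hφanti.antitoneOn hm1 hm2 hle) hVLpos.le
  refine ⟨hineq2.trans hineq1, fun hs => ⟨fun he => ?_, fun hd => ?_⟩⟩
  · have h1 : Vφ = VL * φ (T / VL) := le_antisymm (he ▸ hineq2) hineq1
    have h2 : φ (T / VL) = φ (Z / VL) := mul_left_cancel₀ hVLpos.ne' (h1.symm.trans he)
    have h3 : T / VL = Z / VL := hφanti.injOn hm1 hm2 h2
    have h4 : T = Z := by
      have := hVLpos.ne'
      field_simp at h3
      exact h3
    have h5 := hJ.2 hs (by
      apply mul_left_cancel₀ hc'.ne'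
      rw [← hVφ, h1, hVL]; ring)
    have h6 := hAF.2 h4
    have hVp : ∀ i ∈ Finset.Icc 1 r, 0 < VAF i ^ ((r : ℝ)⁻¹) := fun i hi => by
      apply Real.rpow_pos_of_pos
      rw [hVAF]
      exact mul_pos hc' (cont_integral_pos (((hgc i hi).pow r).mul hQc)
        (fun u => mul_pos (pow_pos (hgp i hi u) r) (hQp u)))
    intro i hi1 hir
    have hi : i ∈ Finset.Icc 1 r := Finset.mem_Icc.2 ⟨hi1, hir⟩
    have hpi := hVp i hi
    have hp1 := hVp 1 h1mem
    refine ⟨VAF i ^ ((r : ℝ)⁻¹) / VAF 1 ^ ((r : ℝ)⁻¹) * (T / VL),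
      mul_pos (div_pos hpi hp1) hm1, fun u => ?_⟩
    have h7 := h6 i hi 1 h1mem u
    have h8 := h5 u
    rw [div_eq_iff (hLpos u).ne'] at h8
    rw [div_eq_iff hpi.ne', h8] at h7
    rw [h7]
    ring
  · have hd' : ∀ i, ∃ d : ℝ, i ∈ Finset.Icc 1 r → 0 < d ∧ ∀ u, ρ i u = d * ρL u := fun i => by
      by_cases hi : i ∈ Finset.Icc 1 r
      · have hi' := Finset.mem_Icc.1 hi
        obtain ⟨d, hd1⟩ := hd i hi'.1 hi'.2
        exact ⟨d, fun _ => hd1⟩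
      · exact ⟨0, fun h => absurd h hi⟩
    choose d hd using hd'
    set A := 1 / (n : ℝ) * ∫ u, ρL u ^ r * Q u ∂(sphereσ n) with hAdef
    have hA : 0 < A := mul_pos hc' (cont_integral_pos ((hLc.pow r).mul hQc)
        (fun u => mul_pos (pow_pos (hLpos u) r) (hQp u)))
    have hV : ∀ i ∈ Finset.Icc 1 r, VAF i ^ ((r : ℝ)⁻¹) = d i * A ^ ((r : ℝ)⁻¹) := fun i hi => by
      obtain ⟨hdp, hdu⟩ := hd i hi
      have e : VAF i = d i ^ r * A := by
        rw [hVAF, hAdef]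
        simp_rw [hdu, mul_pow, mul_assoc]
        rw [integral_const_mul]; ring
      rw [e, Real.mul_rpow (by positivity) hA.le, Real.pow_rpow_inv_natCast hdp.le hr0]
    have hZ2 : Z = (∏ i ∈ Finset.Icc 1 r, d i) * A := by
      rw [hZ, Finset.prod_congr rfl hV, Finset.prod_mul_distrib, Finset.prod_const,
        Nat.card_Icc, Nat.add_sub_cancel, Real.rpow_inv_natCast_pow hA.le hr0]
    have hT2 : T = (∏ i ∈ Finset.Icc 1 r, d i) * A := by
      have e : ∀ u, (∏ i ∈ Finset.Icc 1 r, ρ i u) * Q u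
          = (∏ i ∈ Finset.Icc 1 r, d i) * (ρL u ^ r * Q u) := fun u => by
        rw [Finset.prod_congr rfl (fun i hi => (hd i hi).2 u), Finset.prod_mul_distrib,
          Finset.prod_const, Nat.card_Icc, Nat.add_sub_cancel]
        ring
      rw [hT, hI, hAdef]
      simp_rw [e]
      rw [integral_const_mul]; ring
    have hf1 : ∀ u, ρ 1 u / ρL u = d 1 := fun u => by
      rw [(hd 1 h1mem).2 u, mul_div_cancel_right₀ _ (hLpos u).ne']
    have hT3 : T = d 1 * VL := by
      rw [hT, hI, hVL, hWdef]
      simp_rw [← hfw, hf1]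
      rw [integral_const_mul]; ring
    rw [hZ2, ← hT2, hT3, mul_div_cancel_right₀ _ hVLpos.ne', hVφ]
    simp_rw [hf1]
    rw [integral_const_mul, hVL]
    ring
end

section
/- Let φ : (0,∞) → (0,∞) be convex and strictly decreasing, K, L star bodies in ℝⁿ, and 0 ≤ i < n. Then φ(1) ≥ φ( (W̃ᵢ(K)/W̃ᵢ(K+̂_φL))^{1/(n-i)} ) + φ( (W̃ᵢ(L)/W̃ᵢ(K+̂_φL))^{1/(n-i)} ). If φ is strictly convex, equality holds if and only if K and L are dilates. -/
open MeasureTheory Metric Set Real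

/-- local graph chart -/
noncomputable def graphChart (m : ℕ) (j : Fin (m+1)) (s : ℝ) (y : Fin m → ℝ) :
    EuclideanSpace ℝ (Fin (m+1)) :=
  WithLp.toLp 2 (Fin.insertNth (α := fun _ => ℝ) j (s * √(1 - ∑ k, y k ^ 2)) y)

def dropCoord (m : ℕ) (j : Fin (m+1)) (v : EuclideanSpace ℝ (Fin (m+1))) : Fin m → ℝ :=
  fun k => v (j.succAbove k)

lemma dropCoord_lip (m : ℕ) (j : Fin (m+1)) : LipschitzWith 1 (dropCoord m j) := by
  apply LipschitzWith.of_dist_le_mul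
  intro x y
  simp only [NNReal.coe_one, one_mul]
  rw [dist_pi_le_iff dist_nonneg]
  intro k
  simp only [dropCoord]
  rw [dist_eq_norm, dist_eq_norm]
  exact PiLp.norm_apply_le (x - y) (j.succAbove k)

lemma mem_sphere_iff (m : ℕ) (j : Fin (m+1)) (v : EuclideanSpace ℝ (Fin (m+1))) :
    v ∈ sphere (0 : EuclideanSpace ℝ (Fin (m+1))) 1 ↔
      v j ^ 2 + ∑ k, dropCoord m j v k ^ 2 = 1 := by
  rw [EuclideanSpace.sphere_zero_eq _ zero_le_one, mem_ofPred_eq, Fin.sum_univ_succAbove _ j]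
  simp [dropCoord]

lemma graphChart_apply_same (m : ℕ) (j : Fin (m+1)) (s : ℝ) (y : Fin m → ℝ) :
    graphChart m j s y j = s * √(1 - ∑ k, y k ^ 2) := by simp [graphChart]

lemma dropCoord_graphChart (m : ℕ) (j : Fin (m+1)) (s : ℝ) (y : Fin m → ℝ) :
    dropCoord m j (graphChart m j s y) = y := by
  funext k; simp [graphChart, dropCoord]

lemma graphChart_mem (m : ℕ) (j : Fin (m+1)) (s : ℝ) (hs : s * s = 1) (y : Fin m → ℝ)
    (hy : 0 ≤ 1 - ∑ k, y k ^ 2) :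
    graphChart m j s y ∈ sphere (0 : EuclideanSpace ℝ (Fin (m+1))) 1 := by
  rw [mem_sphere_iff m j, dropCoord_graphChart, graphChart_apply_same, mul_pow, Real.sq_sqrt hy,
    sq, hs]
  ring

lemma graphChart_dropCoord (m : ℕ) (j : Fin (m+1)) (s : ℝ) (hs : s * s = 1)
    (v : EuclideanSpace ℝ (Fin (m+1)))
    (hv : v ∈ sphere (0 : EuclideanSpace ℝ (Fin (m+1))) 1) (hpos : 0 < s * v j) :
    graphChart m j s (dropCoord m j v) = v := by
  rw [mem_sphere_iff m j] at hv
  have h1 : √(1 - ∑ k, dropCoord m j v k ^ 2) = s * v j := by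
    rw [show 1 - ∑ k, dropCoord m j v k ^ 2 = (s * v j) ^ 2 by
      rw [mul_pow, sq s, hs]; linarith]
    exact Real.sqrt_sq hpos.le
  ext k
  rcases Fin.eq_self_or_eq_succAbove j k with rfl | ⟨l, rfl⟩
  · rw [graphChart_apply_same, h1, ← mul_assoc, hs, one_mul]
  · exact congrFun (dropCoord_graphChart m j s (dropCoord m j v)) l

lemma graphChart_contDiffAt (m : ℕ) (j : Fin (m+1)) (s : ℝ) (y : Fin m → ℝ)
    (hy : 0 < 1 - ∑ k, y k ^ 2) : ContDiffAt ℝ 1 (graphChart m j s) y := by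
  rw [contDiffAt_euclidean]
  intro k
  rcases Fin.eq_self_or_eq_succAbove j k with rfl | ⟨l, rfl⟩
  · simp only [graphChart_apply_same]
    refine contDiffAt_const.mul (ContDiffAt.sqrt ?_ hy.ne')
    fun_prop
  · have : (fun x => graphChart m j s x (j.succAbove l)) = fun x => x l := by
      funext x; exact congrFun (dropCoord_graphChart m j s x) l
    rw [this]; fun_prop

lemma exists_sign (m : ℕ) (u : sphere (0 : EuclideanSpace ℝ (Fin (m+1))) 1) :
    ∃ (j : Fin (m+1)) (s : ℝ), s * s = 1 ∧ 0 < s * u.1 j := by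
  have : ∃ j, u.1 j ≠ 0 := by
    by_contra! h
    have h1 := u.2
    rw [mem_sphere_iff m 0] at h1
    simp [h, dropCoord] at h1
  obtain ⟨j, hj⟩ := this
  rcases lt_or_gt_of_ne hj with h | h
  · exact ⟨j, -1, by norm_num, by linarith⟩
  · exact ⟨j, 1, by norm_num, by linarith⟩

lemma hyp_pos (m : ℕ) (u : sphere (0 : EuclideanSpace ℝ (Fin (m+1))) 1) (j : Fin (m+1)) (s : ℝ)
    (h : 0 < s * u.1 j) : 0 < 1 - ∑ k, dropCoord m j u.1 k ^ 2 := by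
  have := (mem_sphere_iff m j u.1).1 u.2
  have h2 : u.1 j ≠ 0 := by rintro h0; simp [h0] at h
  have := sq_pos_of_ne_zero h2
  linarith

lemma sphereσ_succ (m : ℕ) : sphereσ (m+1) = μH[(m:ℝ)] := by
  simp [sphereσ]

lemma muH_fin (m : ℕ) : (μH[(m:ℝ)] : Measure (Fin m → ℝ)) = volume := by
  have := hausdorffMeasure_pi_real (ι := Fin m)
  simpa using this

open Topology in
instance sphereσ_finite (m : ℕ) : IsFiniteMeasure (sphereσ (m+1)) := by
  have : IsLocallyFiniteMeasure (sphereσ (m+1)) := by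
    constructor
    intro u
    obtain ⟨j, s, hs, hj⟩ := exists_sign m u
    have hy := hyp_pos m u j s hj
    obtain ⟨K, t, ht, hK⟩ := (graphChart_contDiffAt m j s _ hy).exists_lipschitzOnWith
    have hb : t ∩ ball (dropCoord m j u.1) 1 ∈ 𝓝 (dropCoord m j u.1) :=
      Filter.inter_mem ht (ball_mem_nhds _ one_pos)
    have hc : Continuous (fun v : sphere (0 : EuclideanSpace ℝ (Fin (m+1))) 1 =>
      dropCoord m j v.1) := (dropCoord_lip m j).continuous.comp continuous_subtype_val
    have hc2 : Continuous (fun v : sphere (0 : EuclideanSpace ℝ (Fin (m+1))) 1 =>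
      s * v.1 j) := by fun_prop
    refine ⟨_, Filter.inter_mem (hc.continuousAt.preimage_mem_nhds hb)
      (hc2.continuousAt.preimage_mem_nhds (Ioi_mem_nhds hj)), ?_⟩
    rw [sphereσ_succ, ← (isometry_subtype_coe).hausdorffMeasure_image (Or.inl (Nat.cast_nonneg m))]
    refine lt_of_le_of_lt (measure_mono (t := graphChart m j s ''
      (t ∩ ball (dropCoord m j u.1) 1)) ?_) ?_
    · rintro _ ⟨v, ⟨hv1, hv2⟩, rfl⟩
      exact ⟨_, hv1, graphChart_dropCoord m j s hs v.1 v.2 hv2⟩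
    · refine lt_of_le_of_lt ((hK.mono inter_subset_left).hausdorffMeasure_image_le
        (Nat.cast_nonneg m)) ?_
      rw [muH_fin]
      refine ENNReal.mul_lt_top (by simp) ?_
      exact lt_of_le_of_lt (measure_mono inter_subset_right) measure_ball_lt_top
  infer_instance

open Topology in
instance sphereσ_openPos (m : ℕ) : (sphereσ (m+1)).IsOpenPosMeasure := by
  constructor
  rintro U hU ⟨u, hu⟩ h0
  obtain ⟨j, s, hs, hj⟩ := exists_sign m u
  have hy := hyp_pos m u j s hj
  obtain ⟨O, hO, rfl⟩ := isOpen_induced_iff.1 hU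
  have hcont := (graphChart_contDiffAt m j s _ hy).continuousAt
  have hpre : graphChart m j s ⁻¹' O ∈ 𝓝 (dropCoord m j u.1) := by
    apply hcont.preimage_mem_nhds
    rw [graphChart_dropCoord m j s hs _ u.2 hj]
    exact hO.mem_nhds hu
  have hc : Continuous (fun y : Fin m → ℝ => 1 - ∑ k, y k ^ 2) := by fun_prop
  have hpre2 := hc.continuousAt.preimage_mem_nhds (Ioi_mem_nhds hy)
  have hpos := Measure.measure_pos_of_mem_nhds volume (Filter.inter_mem hpre hpre2)
  rw [← muH_fin] at hpos
  have hlip : LipschitzWith 1 (fun v : sphere (0 : EuclideanSpace ℝ (Fin (m+1))) 1 =>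
      dropCoord m j v.1) := by
    have := (dropCoord_lip m j).comp (LipschitzWith.subtype_val (sphere (0 : EuclideanSpace ℝ (Fin (m+1))) 1))
    rw [one_mul] at this
    exact this
  have hle := hlip.hausdorffMeasure_image_le (Nat.cast_nonneg m) (Subtype.val ⁻¹' O)
  rw [← sphereσ_succ, h0, mul_zero] at hle
  refine absurd (lt_of_lt_of_le hpos (le_trans (measure_mono ?_) hle)) (lt_irrefl _)
  rintro y ⟨h1, h2⟩
  exact ⟨⟨graphChart m j s y, graphChart_mem m j s hs y (le_of_lt h2)⟩, h1,
    dropCoord_graphChart m j s y⟩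

lemma exists_support (p : ℕ) (hp : p ≠ 0) (φ : ℝ → ℝ)
    (hφconv : ConvexOn ℝ (Ioi 0) φ) (hφanti : StrictAntiOn φ (Ioi 0)) (M : ℝ) (hM : 0 < M) :
    ∃ c : ℝ, (∀ x, 0 < x → 0 ≤ φ x - φ M - c * (x ^ p - M ^ p)) ∧
      (StrictConvexOn ℝ (Ioi 0) φ → ∀ x, 0 < x → φ x - φ M - c * (x ^ p - M ^ p) = 0 → x = M) := by
  obtain ⟨d, hd⟩ : ∃ d : ℝ, ∀ x, 0 < x → φ M + d * (x - M) ≤ φ x := by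
    have hMi : M ∈ interior (Ioi (0:ℝ)) := by rw [interior_Ioi]; exact hM
    refine ⟨derivWithin φ (Ioi M) M, fun x hx => ?_⟩
    rcases lt_trichotomy x M with h | rfl | h
    · have h1 := hφconv.slope_le_leftDeriv_of_mem_interior (x := x) hx hMi h
      have h2 := hφconv.leftDeriv_le_rightDeriv_of_mem_interior hMi
      have h3 := h1.trans h2
      rw [slope_def_field, div_le_iff₀ (by linarith)] at h3
      linarith
    · simp
    · have h1 := hφconv.rightDeriv_le_slope_of_mem_interior (y := x) hMi hx h
      rw [slope_def_field, le_div_iff₀ (by linarith)] at h1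
      linarith
  have hd0 : d ≤ 0 := by
    have h1 := hd (2 * M) (by linarith)
    have h2 := hφanti (a := M) hM (b := 2 * M) (by simp [hM]) (by linarith)
    by_contra! h
    nlinarith [mul_pos h hM]
  have hp0 : (0:ℝ) < p := by exact_mod_cast Nat.pos_of_ne_zero hp
  have hbern : ∀ x, 0 < x → d / (p * M ^ p) * M * (x ^ p - M ^ p) ≤ d * (x - M) := by
    intro x hx
    have h1 := one_add_mul_sub_le_pow (a := x / M) (by have := div_pos hx hM; linarith) p
    have h2 : p * (x / M - 1) * M ^ p ≤ x ^ p - M ^ p := by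
      have h3 : (x / M) ^ p * M ^ p = x ^ p := by
        rw [← mul_pow, div_mul_cancel₀ _ hM.ne']
      have := mul_le_mul_of_nonneg_right h1 (pow_pos hM p).le
      nlinarith
    have h4 : d / (p * M ^ p) * M ≤ 0 := by
      apply mul_nonpos_of_nonpos_of_nonneg _ hM.le
      apply div_nonpos_of_nonpos_of_nonneg hd0
      positivity
    have h5 := mul_le_mul_of_nonpos_left h2 h4
    refine h5.trans (le_of_eq ?_)
    have := (pow_pos hM p).ne'
    field_simp
  refine ⟨d / (p * M ^ p) * M, fun x hx => ?_, fun hs x hx h0 => ?_⟩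
  · linarith [hbern x hx, hd x hx]
  · by_contra hne
    have h1 := hs.2 (show x ∈ Ioi (0:ℝ) from hx) (show M ∈ Ioi (0:ℝ) from hM) hne
      (show (0:ℝ) < 1/2 by norm_num) (show (0:ℝ) < 1/2 by norm_num) (by norm_num)
    simp only [smul_eq_mul] at h1
    have h2 := hd (1/2 * x + 1/2 * M) (by positivity)
    have h3 := hbern x hx
    linarith

lemma key {X : Type*} [TopologicalSpace X] [CompactSpace X] [MeasurableSpace X] [BorelSpace X]
    [Nonempty X] (μ : Measure X) [IsFiniteMeasure μ] [μ.IsOpenPosMeasure]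
    (p : ℕ) (hp : p ≠ 0)
    (φ : ℝ → ℝ)
    (hφconv : ConvexOn ℝ (Ioi 0) φ)
    (hφanti : StrictAntiOn φ (Ioi 0))
    (ρK ρL ρQ : X → ℝ)
    (hKc : Continuous ρK) (hLc : Continuous ρL) (hQc : Continuous ρQ)
    (hKpos : ∀ u, 0 < ρK u) (hLpos : ∀ u, 0 < ρL u) (hQpos : ∀ u, 0 < ρQ u)
    (hsum : ∀ u, φ (ρK u / ρQ u) + φ (ρL u / ρQ u) = φ 1)
    (A B : ℝ) (hA : 0 < A) (hB : 0 < B)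
    (hAp : A ^ p * ∫ u, ρQ u ^ p ∂μ = ∫ u, ρK u ^ p ∂μ)
    (hBp : B ^ p * ∫ u, ρQ u ^ p ∂μ = ∫ u, ρL u ^ p ∂μ) (hQ : 0 < ∫ u, ρQ u ^ p ∂μ) :
    φ 1 ≥ φ A + φ B ∧ (StrictConvexOn ℝ (Ioi 0) φ →
      (φ 1 = φ A + φ B ↔ ∃ c : ℝ, 0 < c ∧ ∀ u, ρK u = c * ρL u)) := by
  obtain ⟨c, hc, hc'⟩ := exists_support p hp φ hφconv hφanti A hA
  obtain ⟨d, hd, hd'⟩ := exists_support p hp φ hφconv hφanti B hB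
  have hint : ∀ f : X → ℝ, Continuous f → Integrable f μ := fun f hf =>
    hf.integrable_of_hasCompactSupport (HasCompactSupport.of_compactSpace f)
  set G : X → ℝ := fun u => (φ 1 - φ A - φ B + c * A ^ p + d * B ^ p) * ρQ u ^ p
    - c * ρK u ^ p - d * ρL u ^ p with hG
  have hGc : Continuous G := by fun_prop
  have hGe : ∀ u, G u = ρQ u ^ p * ((φ (ρK u / ρQ u) - φ A - c * ((ρK u / ρQ u) ^ p - A ^ p)) +
      (φ (ρL u / ρQ u) - φ B - d * ((ρL u / ρQ u) ^ p - B ^ p))) := by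
    intro u
    have h0 := (pow_pos (hQpos u) p).ne'
    simp only [hG, ← hsum u, div_pow]
    field_simp
    ring
  have hG0 : 0 ≤ G := by
    intro u
    rw [hGe]
    have := pow_pos (hQpos u) p
    have := hc _ (div_pos (hKpos u) (hQpos u))
    have := hd _ (div_pos (hLpos u) (hQpos u))
    simp only [Pi.zero_apply]
    positivity
  have hGi : ∫ u, G u ∂μ = (φ 1 - φ A - φ B) * ∫ u, ρQ u ^ p ∂μ := by
    simp only [hG]
    rw [integral_sub (hint _ (by fun_prop)) (hint _ (by fun_prop)),
      integral_sub (hint _ (by fun_prop)) (hint _ (by fun_prop)),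
      integral_const_mul, integral_const_mul, integral_const_mul, ← hAp, ← hBp]
    ring
  refine ⟨?_, fun hs => ⟨fun heq => ?_, ?_⟩⟩
  · have h1 : 0 ≤ ∫ u, G u ∂μ := integral_nonneg hG0
    rw [hGi] at h1
    have := nonneg_of_mul_nonneg_left h1 hQ
    linarith
  · have hz : ∀ u, G u = 0 := by
      intro u
      by_contra hne
      have := integral_pos_of_integrable_nonneg_nonzero hGc (hint G hGc) hG0 hne
      rw [hGi, heq] at this
      simp at this
    refine ⟨A / B, div_pos hA hB, fun u => ?_⟩
    have h1 := hc _ (div_pos (hKpos u) (hQpos u))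
    have h2 := hd _ (div_pos (hLpos u) (hQpos u))
    have h3 := hz u
    rw [hGe, mul_eq_zero] at h3
    have h4 := h3.resolve_left (pow_pos (hQpos u) p).ne'
    have h5 := hc' hs _ (div_pos (hKpos u) (hQpos u)) (by linarith)
    have h6 := hd' hs _ (div_pos (hLpos u) (hQpos u)) (by linarith)
    rw [div_eq_iff (hQpos u).ne'] at h5 h6
    rw [h5, h6]
    field_simp
  · rintro ⟨e, he, hKL⟩
    obtain ⟨u0⟩ := ‹Nonempty X›
    set t := ρL u0 / ρQ u0 with ht
    have htpos : 0 < t := div_pos (hLpos u0) (hQpos u0)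
    have hlt : ∀ x y, 0 < x → x < y → φ (e * y) + φ y < φ (e * x) + φ x := by
      intro x y hx hxy
      have hy := hx.trans hxy
      exact add_lt_add (hφanti (mul_pos he hx) (mul_pos he hy) (mul_lt_mul_of_pos_left hxy he))
        (hφanti hx hy hxy)
    have hφ : ∀ u, φ (e * (ρL u / ρQ u)) + φ (ρL u / ρQ u) = φ 1 := by
      intro u; rw [← hsum u, hKL u, mul_div_assoc]
    have hconst : ∀ u, ρL u = t * ρQ u := by
      intro u
      rw [← div_eq_iff (hQpos u).ne']
      rcases lt_trichotomy (ρL u / ρQ u) t with h | h | h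
      · have := hlt _ _ (div_pos (hLpos u) (hQpos u)) h
        rw [hφ u, hφ u0] at this
        exact absurd this (lt_irrefl _)
      · exact h
      · have := hlt _ _ htpos h
        rw [hφ u, hφ u0] at this
        exact absurd this (lt_irrefl _)
    have hBt : B = t := by
      have h1 : B ^ p = t ^ p := by
        apply mul_right_cancel₀ hQ.ne'
        rw [hBp, ← integral_const_mul]
        simp only [hconst, mul_pow]
      exact (pow_left_inj₀ hB.le htpos.le hp).1 h1
    have hAt : A = e * t := by
      have h1 : A ^ p = (e * t) ^ p := by
        apply mul_right_cancel₀ hQ.ne'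
        rw [hAp, ← integral_const_mul]
        simp only [hKL, hconst, mul_pow, mul_assoc]
      exact (pow_left_inj₀ hA.le (mul_pos he htpos).le hp).1 h1
    rw [hAt, hBt, ht, hφ u0]

/-- Dual Orlicz–Brunn–Minkowski inequality for dual quermassintegrals, for the Orlicz
harmonic sum `Q = K +̂_φ L`:
`φ(1) ≥ φ((W̃ᵢ(K)/W̃ᵢ(Q))^{1/(n-i)}) + φ((W̃ᵢ(L)/W̃ᵢ(Q))^{1/(n-i)})`;
if `φ` is strictly convex, equality holds iff `K` and `L` are dilates. -/
theorem dual_orlicz_brunn_minkowski_quermassintegral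
    (n i : ℕ) (hi : i < n)
    (φ : ℝ → ℝ)
    (hφconv : ConvexOn ℝ (Ioi 0) φ)
    (hφanti : StrictAntiOn φ (Ioi 0))
    (hφpos : ∀ t ∈ Ioi (0 : ℝ), 0 < φ t)
    (ρK ρL ρQ : sphere (0 : EuclideanSpace ℝ (Fin n)) 1 → ℝ)
    (hKc : Continuous ρK) (hLc : Continuous ρL) (hQc : Continuous ρQ)
    (hKpos : ∀ u, 0 < ρK u) (hLpos : ∀ u, 0 < ρL u) (hQpos : ∀ u, 0 < ρQ u)
    (hsum : ∀ u, φ (ρK u / ρQ u) + φ (ρL u / ρQ u) = φ 1)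
    (WK WL WQ : ℝ)
    (hWK : WK = (1 / n) * ∫ u, (ρK u) ^ (n - i) ∂(sphereσ n))
    (hWL : WL = (1 / n) * ∫ u, (ρL u) ^ (n - i) ∂(sphereσ n))
    (hWQ : WQ = (1 / n) * ∫ u, (ρQ u) ^ (n - i) ∂(sphereσ n)) :
    φ 1 ≥ φ ((WK / WQ) ^ (((n : ℝ) - i)⁻¹)) + φ ((WL / WQ) ^ (((n : ℝ) - i)⁻¹)) ∧
      (StrictConvexOn ℝ (Ioi 0) φ →
        (φ 1 = φ ((WK / WQ) ^ (((n : ℝ) - i)⁻¹)) + φ ((WL / WQ) ^ (((n : ℝ) - i)⁻¹)) ↔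
          ∃ c : ℝ, 0 < c ∧ ∀ u, ρK u = c * ρL u)) := by
  obtain ⟨m, rfl⟩ : ∃ m, n = m + 1 := ⟨n - 1, by omega⟩
  have hne : Nonempty (sphere (0 : EuclideanSpace ℝ (Fin (m+1))) 1) :=
    (NormedSpace.sphere_nonempty.2 zero_le_one).to_subtype
  have hp : m + 1 - i ≠ 0 := by omega
  have hcast : (((m + 1 : ℕ) : ℝ) - i) = ((m + 1 - i : ℕ) : ℝ) := by
    rw [Nat.cast_sub hi.le]
  rw [hcast]
  generalize m + 1 - i = p at *
  have hipos : ∀ f : sphere (0 : EuclideanSpace ℝ (Fin (m+1))) 1 → ℝ, Continuous f →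
      (∀ u, 0 < f u) → 0 < ∫ u, f u ^ p ∂(sphereσ (m+1)) := by
    intro f hf hpos
    obtain ⟨u0⟩ := hne
    exact integral_pos_of_integrable_nonneg_nonzero (x := u0) (by fun_prop)
      ((hf.pow p).integrable_of_hasCompactSupport (HasCompactSupport.of_compactSpace _))
      (fun u => (pow_pos (hpos u) p).le) (pow_pos (hpos u0) p).ne'
  have hIK := hipos ρK hKc hKpos
  have hIL := hipos ρL hLc hLpos
  have hIQ := hipos ρQ hQc hQpos
  have hm : (0:ℝ) < 1 / ((m + 1 : ℕ) : ℝ) := by positivity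
  rw [hWK, hWL, hWQ, mul_div_mul_left _ _ hm.ne', mul_div_mul_left _ _ hm.ne']
  have hAK := div_pos hIK hIQ
  have hAL := div_pos hIL hIQ
  refine key (sphereσ (m+1)) p hp φ hφconv hφanti ρK ρL ρQ hKc hLc hQc hKpos hLpos hQpos hsum _ _
    (Real.rpow_pos_of_pos hAK _) (Real.rpow_pos_of_pos hAL _) ?_ ?_ hIQ
  · rw [Real.rpow_inv_natCast_pow hAK.le hp, div_mul_cancel₀ _ hIQ.ne']
  · rw [Real.rpow_inv_natCast_pow hAL.le hp, div_mul_cancel₀ _ hIQ.ne']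
end
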